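/- There exists a constant C>0 such that, for all b>0 and all r≥1, e_N(b,r) ≥ e_D(b,r) − C r √b. -/

import Mathlib

open MeasureTheory Real Set Filter Topology

noncomputable section

/-- The open square `Q_r = (-r/2, r/2) × (-r/2, r/2)`. -/
def Qsq (r : ℝ) : Set (ℝ × ℝ) := Ioo (-r/2) (r/2) ×ˢ Ioo (-r/2) (r/2)

/-- The vertical strip `S_R = (-R/2, R/2) × ℝ`. -/
def Strip (R : ℝ) : Set (ℝ × ℝ) := Ioo (-R/2) (R/2) ×ˢ (univ : Set ℝ)

/-- The magnetic potential `A₀(x) = (-x₂/2, x₁/2)` of the constant unit magnetic field. -/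
def A₀ (x : ℝ × ℝ) : ℝ × ℝ := (-x.2 / 2, x.1 / 2)

/-- The magnetic potential `A_van(x) = (-x₂²/2, 0)` generating the field `B(x) = x₂`. -/
def Avan (x : ℝ × ℝ) : ℝ × ℝ := (-x.2 ^ 2 / 2, 0)

/-- The magnetic gradient energy density `|(∇ - iA)u|²` at `x`. -/
def magGradSq (A : ℝ × ℝ → ℝ × ℝ) (u : ℝ × ℝ → ℂ) (x : ℝ × ℝ) : ℝ :=
  ‖fderiv ℝ u x (1, 0) - Complex.I * ((A x).1 : ℂ) * u x‖ ^ 2 +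
  ‖fderiv ℝ u x (0, 1) - Complex.I * ((A x).2 : ℂ) * u x‖ ^ 2

/-- The Ginzburg–Landau functional `F_{b,Q_r}` on the square `Q_r`. -/
def Fsq (b r : ℝ) (u : ℝ × ℝ → ℂ) : ℝ :=
  ∫ x in Qsq r, (b * magGradSq A₀ u x - ‖u x‖ ^ 2 + ‖u x‖ ^ 4 / 2)

/-- (Smooth surrogate of) membership in `H¹(Q_r; ℂ)`. -/
def MemH1sq (u : ℝ × ℝ → ℂ) : Prop := ContDiff ℝ 1 u

/-- (Smooth surrogate of) membership in `H¹₀(Q_r; ℂ)`: vanishing on the boundary. -/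
def MemH10sq (r : ℝ) (u : ℝ × ℝ → ℂ) : Prop :=
  ContDiff ℝ 1 u ∧ ∀ x ∈ frontier (Qsq r), u x = 0

/-- The Dirichlet ground-state energy `e_D(b, r)`. -/
def eD (b r : ℝ) : ℝ := sInf (Fsq b r '' {u | MemH10sq r u})

/-- The Neumann ground-state energy `e_N(b, r)`. -/
def eN (b r : ℝ) : ℝ := sInf (Fsq b r '' {u | MemH1sq u})

/-- The energy density of the strip functional `𝓔_{L,R}` at `x`. -/
def stripDensity (L : ℝ) (u : ℝ × ℝ → ℂ) (x : ℝ × ℝ) : ℝ :=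
  magGradSq Avan u x - L ^ (-(2:ℝ)/3) * ‖u x‖ ^ 2 + (L ^ (-(2:ℝ)/3) / 2) * ‖u x‖ ^ 4

/-- The strip functional `𝓔_{L,R}`. -/
def Estrip (L R : ℝ) (u : ℝ × ℝ → ℂ) : ℝ := ∫ x in Strip R, stripDensity L u x

/-- (Surrogate of) membership in the space `H¹_{mag,0}(S_R)`. -/
def MemH1mag0 (R : ℝ) (u : ℝ × ℝ → ℂ) : Prop :=
  ContDiff ℝ 1 u ∧
  IntegrableOn (fun x => ‖u x‖ ^ 2) (Strip R) ∧
  IntegrableOn (magGradSq Avan u) (Strip R) ∧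
  IntegrableOn (fun x => ‖u x‖ ^ 4) (Strip R) ∧
  ∀ x ∈ frontier (Strip R), u x = 0

/-- The ground-state energy `e_gs(L; R)` of the strip functional. -/
def egs (L R : ℝ) : ℝ := sInf (Estrip L R '' {u | MemH1mag0 R u})

/-- `g : (0,∞) → ℝ` is the thermodynamic limit of the Dirichlet square energies. -/
def IsLimitG (g : ℝ → ℝ) : Prop :=
  ∀ b > 0, Tendsto (fun r => eD b r / r ^ 2) atTop (nhds (g b))

/-- `E : (0,∞) → ℝ` is the large-`R` limit of the strip energies. -/
def IsLimitE (E : ℝ → ℝ) : Prop :=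
  ∀ L > 0, Tendsto (fun R => egs L R / R) atTop (nhds (E L))

/-- The fourth power of the positive part. -/
def PP (y : ℝ) : ℝ := max y 0 ^ 4

theorem PP_deriv (y : ℝ) : HasDerivAt PP (4 * max y 0 ^ 3) y := by
  rcases lt_trichotomy y 0 with h | h | h
  · have h1 : HasDerivAt (fun _ : ℝ => (0:ℝ)) 0 y := hasDerivAt_const y 0
    have h2 : PP =ᶠ[𝓝 y] fun _ => 0 := by
      filter_upwards [Iio_mem_nhds h] with z hz
      simp [PP, max_eq_right (le_of_lt (mem_Iio.1 hz))]
    rw [max_eq_right h.le]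
    simpa using h1.congr_of_eventuallyEq h2
  · subst h
    have h1 : HasDerivWithinAt PP 0 (Iic 0) 0 := by
      refine (hasDerivWithinAt_const (0:ℝ) (Iic 0) (0:ℝ)).congr ?_ (by simp [PP])
      intro z hz
      simp [PP, max_eq_right (mem_Iic.1 hz)]
    have h2 : HasDerivWithinAt PP 0 (Ici 0) 0 := by
      have h3 : HasDerivWithinAt (fun z : ℝ => z ^ 4) 0 (Ici 0) 0 := by
        simpa using (hasDerivAt_pow 4 (0:ℝ)).hasDerivWithinAt (s := Ici 0)
      refine h3.congr ?_ (by simp [PP])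
      intro z hz
      simp [PP, max_eq_left (mem_Ici.1 hz)]
    have h3 := h1.union h2
    rw [Iic_union_Ici, hasDerivWithinAt_univ] at h3
    simpa using h3
  · have h1 : HasDerivAt (fun z : ℝ => z ^ 4) (4 * y ^ 3) y := by
      simpa using hasDerivAt_pow 4 y
    have h2 : PP =ᶠ[𝓝 y] fun z => z ^ 4 := by
      filter_upwards [Ioi_mem_nhds h] with z hz
      simp [PP, max_eq_left (le_of_lt (mem_Ioi.1 hz))]
    rw [max_eq_left h.le]
    exact h1.congr_of_eventuallyEq h2

theorem PP_contDiff : ContDiff ℝ 1 PP := by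
  rw [contDiff_one_iff_deriv]
  refine ⟨fun y => (PP_deriv y).differentiableAt, ?_⟩
  have : deriv PP = fun y => 4 * max y 0 ^ 3 := funext fun y => (PP_deriv y).deriv
  rw [this]
  fun_prop

/-- One-dimensional cut-off. -/
def cut (r l t : ℝ) : ℝ := (1 - PP (1 - (r/2 - t) / l)) * (1 - PP (1 - (r/2 + t) / l))

/-- Its derivative. -/
def cut' (r l t : ℝ) : ℝ :=
  (-(4 * max (1 - (r/2 - t) / l) 0 ^ 3 / l)) * (1 - PP (1 - (r/2 + t) / l))
    + (1 - PP (1 - (r/2 - t) / l)) * (4 * max (1 - (r/2 + t) / l) 0 ^ 3 / l)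

theorem cut_deriv (r l t : ℝ) : HasDerivAt (cut r l) (cut' r l t) t := by
  have h1 : HasDerivAt (fun t : ℝ => 1 - (r/2 - t) / l) (1 / l) t := by
    have := (((hasDerivAt_id t).const_sub (r/2)).div_const l).const_sub 1
    have e : (1:ℝ) / l = -(-1 / l) := by ring
    rw [e]
    exact this
  have h2 : HasDerivAt (fun t : ℝ => 1 - (r/2 + t) / l) (-(1 / l)) t := by
    have := (((hasDerivAt_id t).const_add (r/2)).div_const l).const_sub 1
    exact this
  have h3 := (HasDerivAt.comp t (PP_deriv _) h1).const_sub 1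
  have h4 := (HasDerivAt.comp t (PP_deriv _) h2).const_sub 1
  have h5 := h3.mul h4
  have e : cut' r l t = -(4 * max (1 - (r/2 - t) / l) 0 ^ 3 * (1 / l)) * (1 - PP (1 - (r/2 + t) / l))
      + (1 - PP (1 - (r/2 - t) / l)) * -(4 * max (1 - (r/2 + t) / l) 0 ^ 3 * -(1 / l)) := by
    unfold cut'
    ring
  rw [e]
  exact h5

theorem cut_contDiff (r l : ℝ) : ContDiff ℝ 1 (cut r l) := by
  unfold cut
  have h1 : ContDiff ℝ 1 (fun t : ℝ => 1 - (r/2 - t) / l) := by fun_prop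
  have h2 : ContDiff ℝ 1 (fun t : ℝ => 1 - (r/2 + t) / l) := by fun_prop
  have h3 := PP_contDiff.comp h1
  have h4 := PP_contDiff.comp h2
  exact (contDiff_const.sub h3).mul (contDiff_const.sub h4)

theorem cut_props {r l t : ℝ} (hl : 0 < l) (h1 : -r/2 ≤ t) (h2 : t ≤ r/2) :
    ∃ Y : ℝ, 0 ≤ Y ∧ 0 ≤ cut r l t ∧ cut r l t ≤ 1 - Y ^ 4 ∧
      |cut' r l t| ≤ 8 * Y ^ 3 / l ∧ (0 < Y → t < -r/2 + l ∨ r/2 - l < t) ∧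
      (Y = 0 → cut r l t = 1) := by
  unfold cut cut' PP
  set a := max (1 - (r/2 - t) / l) 0 with ha
  set c := max (1 - (r/2 + t) / l) 0 with hc
  have ha0 : 0 ≤ a := le_max_right _ _
  have hc0 : 0 ≤ c := le_max_right _ _
  have ha1 : a ≤ 1 := max_le (by have : 0 ≤ (r/2 - t)/l := div_nonneg (by linarith) hl.le
                                 linarith) zero_le_one
  have hc1 : c ≤ 1 := max_le (by have : 0 ≤ (r/2 + t)/l := div_nonneg (by linarith) hl.le
                                 linarith) zero_le_one
  have ha4 : a ^ 4 ≤ 1 := pow_le_one₀ ha0 ha1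
  have hc4 : c ^ 4 ≤ 1 := pow_le_one₀ hc0 hc1
  have ha4' : 0 ≤ a ^ 4 := by positivity
  have hc4' : 0 ≤ c ^ 4 := by positivity
  have ha3 : 0 ≤ a ^ 3 := by positivity
  have hc3 : 0 ≤ c ^ 3 := by positivity
  refine ⟨max a c, le_max_of_le_left ha0, mul_nonneg (by linarith) (by linarith), ?_, ?_, ?_, ?_⟩
  · rcases le_total a c with h | h
    · rw [max_eq_right h]; nlinarith
    · rw [max_eq_left h]; nlinarith
  · have key : |-(4 * a ^ 3) * (1 - c ^ 4) + (1 - a ^ 4) * (4 * c ^ 3)| ≤ 8 * max a c ^ 3 := by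
      have h3 : a ^ 3 ≤ max a c ^ 3 := pow_le_pow_left₀ ha0 (le_max_left _ _) 3
      have h4 : c ^ 3 ≤ max a c ^ 3 := pow_le_pow_left₀ hc0 (le_max_right _ _) 3
      rw [abs_le]
      constructor <;> nlinarith [mul_nonneg ha3 hc4', mul_nonneg hc3 ha4',
        mul_nonneg ha3 (sub_nonneg.2 hc4), mul_nonneg hc3 (sub_nonneg.2 ha4)]
    have e : -(4 * a ^ 3 / l) * (1 - c ^ 4) + (1 - a ^ 4) * (4 * c ^ 3 / l)
        = (-(4 * a ^ 3) * (1 - c ^ 4) + (1 - a ^ 4) * (4 * c ^ 3)) / l := by ring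
    rw [e, abs_div, abs_of_pos hl]
    gcongr
  · intro h
    rcases lt_max_iff.1 h with h | h
    · right
      rcases lt_max_iff.1 (ha ▸ h) with h | h
      · have : (r/2 - t)/l < 1 := by linarith
        rw [div_lt_one hl] at this
        linarith
      · exact absurd h (lt_irrefl _)
    · left
      rcases lt_max_iff.1 (hc ▸ h) with h | h
      · have : (r/2 + t)/l < 1 := by linarith
        rw [div_lt_one hl] at this
        linarith
      · exact absurd h (lt_irrefl _)
  · intro h
    have h3 : a = 0 := le_antisymm (h ▸ le_max_left _ _) ha0
    have h4 : c = 0 := le_antisymm (h ▸ le_max_right _ _) hc0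
    rw [h3, h4]; norm_num

theorem young_aux {χ c q p s : ℝ} (hc : 0 < c) (hcc : c ^ 2 = 1 - χ ^ 2) :
    (χ * p + q * s) ^ 2 ≤ p ^ 2 + q ^ 2 * s ^ 2 / c ^ 2 := by
  have h : 0 < c ^ 2 := by positivity
  have e : p ^ 2 + q ^ 2 * s ^ 2 / c ^ 2 = (c ^ 2 * p ^ 2 + q ^ 2 * s ^ 2) / c ^ 2 := by
    field_simp
  rw [e, le_div_iff₀ h]
  have e2 : χ ^ 2 = 1 - c ^ 2 := by linarith
  have : c ^ 2 * p ^ 2 + q ^ 2 * s ^ 2 - (χ * p + q * s) ^ 2 * c ^ 2 = (c ^ 2 * p - χ * q * s) ^ 2 := by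
    linear_combination (-(c^2 * p ^2) - q ^ 2 * s ^ 2) * (e2)
  nlinarith [sq_nonneg (c ^ 2 * p - χ * q * s)]

theorem norm_young {χ c q : ℝ} {p u : ℂ} (hc : 0 < c) (hcc : c ^ 2 = 1 - χ ^ 2) (hχ : 0 ≤ χ) :
    ‖(χ : ℂ) * p + (q : ℂ) * u‖ ^ 2 ≤ ‖p‖ ^ 2 + q ^ 2 * ‖u‖ ^ 2 / c ^ 2 := by
  have h1 : ‖(χ : ℂ) * p + (q : ℂ) * u‖ ≤ χ * ‖p‖ + |q| * ‖u‖ := by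
    refine (norm_add_le _ _).trans ?_
    simp [abs_of_nonneg hχ]
  calc _ ≤ (χ * ‖p‖ + |q| * ‖u‖) ^ 2 := pow_le_pow_left₀ (norm_nonneg _) h1 2
    _ ≤ _ := by simpa using young_aux (q := |q|) (p := ‖p‖) (s := ‖u‖) hc hcc

/-- Pointwise energy comparison. -/
theorem pointwise {b l χ q1 q2 Y : ℝ} {p1 p2 u : ℂ} (hl : 0 < l) (hb : b = l ^ 2)
    (hY : 0 < Y) (hχ : 0 ≤ χ) (hχY : χ ≤ 1 - Y ^ 4)
    (hq1 : |q1| ≤ 8 * Y ^ 3 / l) (hq2 : |q2| ≤ 8 * Y ^ 3 / l) :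
    b * (‖(χ : ℂ) * p1 + (q1 : ℂ) * u‖ ^ 2 + ‖(χ : ℂ) * p2 + (q2 : ℂ) * u‖ ^ 2)
        - (χ * ‖u‖) ^ 2 + (χ * ‖u‖) ^ 4 / 2
      ≤ b * (‖p1‖ ^ 2 + ‖p2‖ ^ 2) - ‖u‖ ^ 2 + ‖u‖ ^ 4 / 2 + 10000 := by
  have hY4 : 0 < Y ^ 4 := by positivity
  have hpos : Y ^ 4 ≤ 1 - χ ^ 2 := by nlinarith
  set c := Real.sqrt (1 - χ ^ 2) with hcdef
  have hc : 0 < c := Real.sqrt_pos.2 (by linarith)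
  have hcc : c ^ 2 = 1 - χ ^ 2 := Real.sq_sqrt (by linarith)
  have hYc : Y ^ 2 ≤ c := by
    apply Real.le_sqrt_of_sq_le
    calc (Y ^ 2) ^ 2 = Y ^ 4 := by ring
      _ ≤ _ := hpos
  have hc1 : c ≤ 1 := by nlinarith [sq_nonneg χ]
  have hbp : 0 < b := by rw [hb]; positivity
  have hq : ∀ q : ℝ, |q| ≤ 8 * Y ^ 3 / l → b * (q ^ 2 * ‖u‖ ^ 2 / c ^ 2) ≤ 64 * c * ‖u‖ ^ 2 := by
    intro q hq
    have h1 : b * q ^ 2 ≤ 64 * c ^ 3 := by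
      have h2 : |q| ^ 2 ≤ (8 * Y ^ 3 / l) ^ 2 := pow_le_pow_left₀ (abs_nonneg _) hq 2
      rw [sq_abs] at h2
      calc b * q ^ 2 ≤ b * (8 * Y ^ 3 / l) ^ 2 := by gcongr
        _ = 64 * (Y ^ 2) ^ 3 := by rw [hb]; field_simp; ring
        _ ≤ 64 * c ^ 3 := by gcongr
    calc b * (q ^ 2 * ‖u‖ ^ 2 / c ^ 2) = (b * q ^ 2) * ‖u‖ ^ 2 / c ^ 2 := by ring
      _ ≤ (64 * c ^ 3) * ‖u‖ ^ 2 / c ^ 2 := by gcongr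
      _ = _ := by field_simp
  have k1 := norm_young (q := q1) (p := p1) (u := u) hc hcc hχ
  have k2 := norm_young (q := q2) (p := p2) (u := u) hc hcc hχ
  have k1' := mul_le_mul_of_nonneg_left k1 hbp.le
  have k2' := mul_le_mul_of_nonneg_left k2 hbp.le
  have l1 := hq q1 hq1
  have l2 := hq q2 hq2
  have fin : 128 * c * ‖u‖ ^ 2 - (χ * ‖u‖) ^ 2 + (χ * ‖u‖) ^ 4 / 2
      ≤ - ‖u‖ ^ 2 + ‖u‖ ^ 4 / 2 + 10000 := by
    set S := ‖u‖ ^ 2 with hS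
    have hS0 : 0 ≤ S := by positivity
    have e1 : (χ * ‖u‖) ^ 2 = (1 - c ^ 2) * S := by rw [mul_pow, hcc]; ring
    have e2 : (χ * ‖u‖) ^ 4 = (1 - c ^ 2) ^ 2 * S ^ 2 := by
      calc (χ * ‖u‖) ^ 4 = ((χ * ‖u‖) ^ 2) ^ 2 := by ring
        _ = _ := by rw [e1]; ring
    have e3 : ‖u‖ ^ 4 = S ^ 2 := by rw [hS]; ring
    rw [e1, e2, e3]
    have f1 : c * (c * S) ≤ 1 * (c * S) := by gcongr
    have f2 : (1 - c ^ 2) ^ 2 ≤ 1 - c ^ 2 := by nlinarith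
    have f3 : (1 - c ^ 2) ^ 2 * S ^ 2 ≤ (1 - c ^ 2) * S ^ 2 := by gcongr
    nlinarith [sq_nonneg (c * S - 129)]
  linarith

theorem isBounded_Qsq (r : ℝ) : Bornology.IsBounded (Qsq r) :=
  (Metric.isBounded_Ioo _ _).prod (Metric.isBounded_Ioo _ _)

theorem measurable_Qsq (r : ℝ) : MeasurableSet (Qsq r) :=
  measurableSet_Ioo.prod measurableSet_Ioo

theorem dens_integrable (b r : ℝ) {u : ℝ × ℝ → ℂ} (hu : ContDiff ℝ 1 u) :
    IntegrableOn (fun x => b * magGradSq A₀ u x - ‖u x‖ ^ 2 + ‖u x‖ ^ 4 / 2) (Qsq r) := by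
  have hc : Continuous (fun x => b * magGradSq A₀ u x - ‖u x‖ ^ 2 + ‖u x‖ ^ 4 / 2) := by
    have h0 := hu.continuous
    have h1 : Continuous (fun x => fderiv ℝ u x (1, 0)) :=
      (hu.continuous_fderiv (by norm_num)).clm_apply continuous_const
    have h2 : Continuous (fun x => fderiv ℝ u x (0, 1)) :=
      (hu.continuous_fderiv (by norm_num)).clm_apply continuous_const
    unfold magGradSq A₀
    fun_prop
  exact (hc.continuousOn.integrableOn_compact (isBounded_Qsq r).isCompact_closure).mono_set
    subset_closure

/-- The two-dimensional cut-off. -/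
def cut2 (r l : ℝ) (x : ℝ × ℝ) : ℝ := cut r l x.1 * cut r l x.2

theorem cut2_contDiff (r l : ℝ) : ContDiff ℝ 1 (cut2 r l) :=
  ((cut_contDiff r l).comp contDiff_fst).mul ((cut_contDiff r l).comp contDiff_snd)

theorem cut2_fderiv (r l : ℝ) (x : ℝ × ℝ) :
    fderiv ℝ (cut2 r l) x (1, 0) = cut' r l x.1 * cut r l x.2 ∧
    fderiv ℝ (cut2 r l) x (0, 1) = cut r l x.1 * cut' r l x.2 := by
  have h1 := (cut_deriv r l x.1).comp_hasFDerivAt x (hasFDerivAt_fst (𝕜 := ℝ) (p := x))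
  have h2 := (cut_deriv r l x.2).comp_hasFDerivAt x (hasFDerivAt_snd (𝕜 := ℝ) (p := x))
  have h3 : HasFDerivAt (cut2 r l) _ x := h1.mul h2
  rw [h3.fderiv]
  constructor <;> simp [mul_comm]

/-- The boundary layer. -/
def layer (r l : ℝ) : Set (ℝ × ℝ) :=
  (Ioo (-r/2) (-r/2 + l) ×ˢ Ioo (-r/2) (r/2) ∪ Ioo (r/2 - l) (r/2) ×ˢ Ioo (-r/2) (r/2)) ∪
  (Ioo (-r/2) (r/2) ×ˢ Ioo (-r/2) (-r/2 + l) ∪ Ioo (-r/2) (r/2) ×ˢ Ioo (r/2 - l) (r/2))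

theorem layer_meas (r l : ℝ) : MeasurableSet (layer r l) := by
  unfold layer
  measurability

theorem layer_vol {r l : ℝ} (hr : 0 ≤ r) (hl : 0 ≤ l) :
    volume (layer r l) ≤ ENNReal.ofReal (4 * r * l) := by
  have hv : ∀ a b c d : ℝ, a ≤ b → volume (Ioo a b ×ˢ Ioo c d : Set (ℝ × ℝ))
      = ENNReal.ofReal ((b - a) * (d - c)) := by
    intro a b c d h
    rw [Measure.volume_eq_prod, Measure.prod_prod, Real.volume_Ioo, Real.volume_Ioo,
      ENNReal.ofReal_mul (by linarith)]
  have hrl : 0 ≤ r * l := mul_nonneg hr hl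
  unfold layer
  refine (measure_union_le _ _).trans ?_
  refine (add_le_add (measure_union_le _ _) (measure_union_le _ _)).trans ?_
  rw [hv _ _ _ _ (by linarith), hv _ _ _ _ (by linarith), hv _ _ _ _ (by linarith),
    hv _ _ _ _ (by linarith)]
  have e1 : (-r/2 + l - -r/2) * (r/2 - -r/2) = r * l := by ring
  have e2 : (r/2 - (r/2 - l)) * (r/2 - -r/2) = r * l := by ring
  have e3 : (r/2 - -r/2) * (-r/2 + l - -r/2) = r * l := by ring
  have e4 : (r/2 - -r/2) * (r/2 - (r/2 - l)) = r * l := by ring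
  rw [e1, e2, e3, e4, ← ENNReal.ofReal_add hrl hrl, ← ENNReal.ofReal_add (by linarith) (by linarith)]
  exact ENNReal.ofReal_le_ofReal (by linarith)

theorem pointwise2 {b r l : ℝ} (hl : 0 < l) (hb : b = l ^ 2) {u : ℝ × ℝ → ℂ}
    (hu : ContDiff ℝ 1 u) {x : ℝ × ℝ} (hx : x ∈ Qsq r) :
    b * magGradSq A₀ (fun y => cut2 r l y • u y) x - ‖cut2 r l x • u x‖ ^ 2
        + ‖cut2 r l x • u x‖ ^ 4 / 2
      ≤ (b * magGradSq A₀ u x - ‖u x‖ ^ 2 + ‖u x‖ ^ 4 / 2)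
        + (layer r l).indicator (fun _ => (10000:ℝ)) x := by
  obtain ⟨⟨hx1, hx2⟩, hx3, hx4⟩ := hx
  obtain ⟨Y, hY0, hf0, hfY, hf', hYl, hY1⟩ := cut_props hl hx1.le hx2.le
  obtain ⟨Z, hZ0, hg0, hgZ, hg', hZl, hZ1⟩ := cut_props hl hx3.le hx4.le
  obtain ⟨d1, d2⟩ := cut2_fderiv r l x
  have hd : fderiv ℝ (fun y => cut2 r l y • u y) x
      = cut2 r l x • fderiv ℝ u x + (fderiv ℝ (cut2 r l) x).smulRight (u x) :=
    fderiv_fun_smul ((cut2_contDiff r l).differentiable (by norm_num) x)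
      (hu.differentiable (by norm_num) x)
  have hf1 : cut r l x.1 ≤ 1 := hfY.trans (by linarith [pow_nonneg hY0 4])
  have hg1 : cut r l x.2 ≤ 1 := hgZ.trans (by linarith [pow_nonneg hZ0 4])
  have hχ : 0 ≤ cut2 r l x := mul_nonneg hf0 hg0
  have hn : ‖cut2 r l x • u x‖ = cut2 r l x * ‖u x‖ := by
    rw [norm_smul, Real.norm_of_nonneg hχ]
  set W := max Y Z with hW
  have hYW : Y ≤ W := le_max_left _ _
  have hZW : Z ≤ W := le_max_right _ _
  have hW0 : 0 ≤ W := hY0.trans hYW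
  set q1 := fderiv ℝ (cut2 r l) x (1, 0) with hq1
  set q2 := fderiv ℝ (cut2 r l) x (0, 1) with hq2
  have b1 : |q1| ≤ 8 * W ^ 3 / l := by
    rw [d1, abs_mul, abs_of_nonneg hg0]
    calc |cut' r l x.1| * cut r l x.2 ≤ |cut' r l x.1| * 1 := by gcongr
      _ ≤ 8 * Y ^ 3 / l := by simpa using hf'
      _ ≤ _ := by gcongr
  have b2 : |q2| ≤ 8 * W ^ 3 / l := by
    rw [d2, abs_mul, abs_of_nonneg hf0]
    calc cut r l x.1 * |cut' r l x.2| ≤ 1 * |cut' r l x.2| := by gcongr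
      _ ≤ 8 * Z ^ 3 / l := by simpa using hg'
      _ ≤ _ := by gcongr
  have m1 : magGradSq A₀ (fun y => cut2 r l y • u y) x =
      ‖((cut2 r l x : ℝ) : ℂ) * (fderiv ℝ u x (1, 0) - Complex.I * ((A₀ x).1 : ℂ) * u x)
        + (q1 : ℂ) * u x‖ ^ 2 +
      ‖((cut2 r l x : ℝ) : ℂ) * (fderiv ℝ u x (0, 1) - Complex.I * ((A₀ x).2 : ℂ) * u x)
        + (q2 : ℂ) * u x‖ ^ 2 := by
    unfold magGradSq
    rw [hd]
    simp only [add_apply, smul_apply,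
      ContinuousLinearMap.smulRight_apply, Complex.real_smul, ← hq1, ← hq2]
    congr 3 <;> ring
  rcases hW0.eq_or_lt with h | h
  · have y0 : Y = 0 := le_antisymm (h ▸ hYW) hY0
    have z0 : Z = 0 := le_antisymm (h ▸ hZW) hZ0
    have c1 : cut2 r l x = 1 := by simp [cut2, hY1 y0, hZ1 z0]
    rw [← h] at b1 b2
    have q10 : q1 = 0 := abs_nonpos_iff.1 (by simpa using b1)
    have q20 : q2 = 0 := abs_nonpos_iff.1 (by simpa using b2)
    have ind : 0 ≤ (layer r l).indicator (fun _ => (10000:ℝ)) x :=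
      indicator_nonneg (fun _ _ => by norm_num) _
    rw [m1, c1, q10, q20]
    simp only [Complex.ofReal_one, one_mul, Complex.ofReal_zero, zero_mul, add_zero, one_smul]
    unfold magGradSq
    linarith
  · have hxl : x ∈ layer r l := by
      rcases lt_max_iff.1 h with h | h
      · rcases hYl h with h | h
        · exact Or.inl (Or.inl ⟨⟨hx1, h⟩, hx3, hx4⟩)
        · exact Or.inl (Or.inr ⟨⟨h, hx2⟩, hx3, hx4⟩)
      · rcases hZl h with h | h
        · exact Or.inr (Or.inl ⟨⟨hx1, hx2⟩, hx3, h⟩)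
        · exact Or.inr (Or.inr ⟨⟨hx1, hx2⟩, h, hx4⟩)
    have hχW : cut2 r l x ≤ 1 - W ^ 4 := by
      unfold cut2
      rcases le_total Y Z with h | h
      · rw [hW, max_eq_right h]; nlinarith
      · rw [hW, max_eq_left h]; nlinarith
    rw [indicator_of_mem hxl, m1, hn]
    exact pointwise hl hb h hχ hχW b1 b2

theorem cut_pm {r l t : ℝ} (h : t = -r/2 ∨ t = r/2) : cut r l t = 0 := by
  unfold cut PP
  rcases h with h | h <;> subst h
  · have : r/2 + -r/2 = 0 := by ring
    rw [this]; simp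
  · simp

theorem cut2_frontier {r l : ℝ} {x : ℝ × ℝ} (hx : x ∈ frontier (Qsq r)) : cut2 r l x = 0 := by
  have ho : IsOpen (Qsq r) := isOpen_Ioo.prod isOpen_Ioo
  rw [ho.frontier_eq] at hx
  obtain ⟨h1, h2⟩ := hx
  have h3 : x ∈ Icc (-r/2) (r/2) ×ˢ Icc (-r/2) (r/2) :=
    closure_minimal (Set.prod_mono Ioo_subset_Icc_self Ioo_subset_Icc_self)
      (isClosed_Icc.prod isClosed_Icc) h1
  obtain ⟨⟨a1, a2⟩, a3, a4⟩ := h3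
  unfold cut2
  by_cases hh : x.1 = -r/2 ∨ x.1 = r/2
  · rw [cut_pm hh, zero_mul]
  by_cases hh' : x.2 = -r/2 ∨ x.2 = r/2
  · rw [cut_pm hh', mul_zero]
  push Not at hh hh'
  exact absurd ⟨⟨lt_of_le_of_ne a1 (Ne.symm hh.1), lt_of_le_of_ne a2 hh.2⟩,
    lt_of_le_of_ne a3 (Ne.symm hh'.1), lt_of_le_of_ne a4 hh'.2⟩ h2

theorem Fsq_cut {b r l : ℝ} (hr : 0 ≤ r) (hl : 0 < l) (hb : b = l ^ 2) {u : ℝ × ℝ → ℂ}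
    (hu : ContDiff ℝ 1 u) :
    Fsq b r (fun y => cut2 r l y • u y) ≤ Fsq b r u + 40000 * r * l := by
  have hv : ContDiff ℝ 1 (fun y => cut2 r l y • u y) := (cut2_contDiff r l).smul hu
  have hfin : volume (layer r l) ≠ ⊤ :=
    ne_top_of_le_ne_top ENNReal.ofReal_ne_top (layer_vol hr hl.le)
  have hi : Integrable ((layer r l).indicator (fun _ => (10000:ℝ))) :=
    (integrable_indicator_iff (layer_meas r l)).2 (integrableOn_const hfin)
  have h1 : Fsq b r (fun y => cut2 r l y • u y) ≤
      ∫ x in Qsq r, ((b * magGradSq A₀ u x - ‖u x‖ ^ 2 + ‖u x‖ ^ 4 / 2)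
        + (layer r l).indicator (fun _ => (10000:ℝ)) x) := by
    unfold Fsq
    exact setIntegral_mono_on (dens_integrable b r hv)
      ((dens_integrable b r hu).add hi.integrableOn) (measurable_Qsq r)
      (fun x hx => pointwise2 hl hb hu hx)
  rw [integral_add (dens_integrable b r hu) hi.integrableOn] at h1
  have h2 : ∫ x in Qsq r, (layer r l).indicator (fun _ => (10000:ℝ)) x ≤ 40000 * r * l := by
    calc _ ≤ ∫ x, (layer r l).indicator (fun _ => (10000:ℝ)) x :=
          setIntegral_le_integral hi
            (Eventually.of_forall fun x => indicator_nonneg (fun _ _ => by norm_num) _)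
      _ = volume.real (layer r l) * 10000 := by
          rw [integral_indicator (layer_meas r l), setIntegral_const, smul_eq_mul]
      _ ≤ (4 * r * l) * 10000 := by
          gcongr
          exact ENNReal.toReal_le_of_le_ofReal (by positivity) (layer_vol hr hl.le)
      _ = _ := by ring
  unfold Fsq at h1 ⊢
  linarith

theorem Fsq_bdd {b r : ℝ} (hb : 0 ≤ b) {u : ℝ × ℝ → ℂ} (hu : ContDiff ℝ 1 u) :
    ∫ _ in Qsq r, (-1/2 : ℝ) ≤ Fsq b r u := by
  unfold Fsq
  refine setIntegral_mono_on (integrableOn_const (isBounded_Qsq r).measure_lt_top.ne)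
    (dens_integrable b r hu) (measurable_Qsq r) (fun x _ => ?_)
  have h : 0 ≤ b * magGradSq A₀ u x := mul_nonneg hb (by unfold magGradSq; positivity)
  nlinarith [sq_nonneg (‖u x‖ ^ 2 - 1)]

/-- `e_N(b,r) ≥ e_D(b,r) - C r √b` for all `b > 0` and `r ≥ 1`. -/
theorem eN_ge_eD_sub :
    ∃ C > (0:ℝ), ∀ b : ℝ, 0 < b → ∀ r : ℝ, 1 ≤ r →
      eN b r ≥ eD b r - C * r * Real.sqrt b := by
  refine ⟨40000, by norm_num, fun b hb r hr => ?_⟩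
  have hl : 0 < Real.sqrt b := Real.sqrt_pos.2 hb
  have hbl : b = Real.sqrt b ^ 2 := (Real.sq_sqrt hb.le).symm
  have hbdd : BddBelow (Fsq b r '' {u | MemH10sq r u}) := by
    refine ⟨∫ _ in Qsq r, (-1/2 : ℝ), ?_⟩
    rintro _ ⟨u, hu, rfl⟩
    exact Fsq_bdd hb.le hu.1
  have hne : (Fsq b r '' {u | MemH1sq u}).Nonempty :=
    ⟨_, fun _ => 0, (contDiff_const : ContDiff ℝ 1 _), rfl⟩
  refine le_csInf hne ?_
  rintro _ ⟨u, hu, rfl⟩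
  have h1 := Fsq_cut (r := r) (by linarith) hl hbl (show ContDiff ℝ 1 u from hu)
  have h2 : eD b r ≤ Fsq b r (fun y => cut2 r (Real.sqrt b) y • u y) :=
    csInf_le hbdd ⟨_, ⟨(cut2_contDiff r _).smul hu, fun x hx => by
      simp [cut2_frontier hx]⟩, rfl⟩
  linarith

end
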